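/- Let n ≥ 1 and let f : C^{gp}_{n+1}(M;ℤ)_G → A be a group (n+1)-cocycle, i.e. a homomorphism with f ∘ ∂^{gp}_{n+2} = 0. Then Φ_f := f ∘ ψ_n ∘ γ_n : C^{BR}_n(X;ℤ)_X → A is a birack n-cocycle of the G-Alexander biquandle X with X-set X, i.e. Φ_f ∘ ∂^{BR}_{n+1} = 0. -/

import Mathlib

open FreeAbelianGroup
open scoped TensorProduct

namespace GAlex

variable {G M A : Type*} [Group G] [AddCommGroup M] [DistribMulAction Gᵐᵒᵖ M] [AddCommGroup A]

/-- The right action `m · g` of a group element `g : G` on `m : M`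
(coming from the right `ℤ[G]`-module structure on `M`). -/
def ract (m : M) (g : G) : M := MulOpposite.op g • m

variable (φ : G →* G)

/-- The operation `(m,g) ⊳ (n,h) = (mh + n(φ(h) − h), h⁻¹gh)` of the `G`-Alexander biquandle. -/
def under (x y : M × G) : M × G :=
  (ract x.1 y.2 + ract y.1 (φ y.2) - ract y.1 y.2, y.2⁻¹ * x.2 * y.2)

/-- The operation `(m,g) ⊚ (n,h) = (mφ(h), g)` of the `G`-Alexander biquandle. -/
def overOp (x y : M × G) : M × G := (ract x.1 (φ y.2), x.2)

/-- The face `g_{⟨p⟩}` (delete the `p`-th entry). -/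
def dGdel (n : ℕ) (p : Fin (n + 1)) (g : Fin (n + 1) → G) : Fin n → G :=
  fun j => g (p.succAbove j)

/-- The face `g_{⟨⊲p⟩}` (conjugate the first entries by `g p` and delete the `p`-th entry). -/
def dGconj (n : ℕ) (p : Fin (n + 1)) (g : Fin (n + 1) → G) : Fin n → G :=
  fun j => if (j : ℕ) < (p : ℕ) then (g p)⁻¹ * g j.castSucc * g p else g j.succ

/-- The face `m_{⟨p⟩}` (merge the two entries adjacent to position `p`;
for `p = 0` drop the first entry). -/
def dMmer (n : ℕ) (p : Fin (n + 1)) (m : Fin (n + 1) → M) : Fin n → M :=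
  fun j =>
    if (j : ℕ) + 1 < (p : ℕ) then m j.castSucc
    else if (j : ℕ) + 1 = (p : ℕ) then m j.castSucc + m j.succ
    else m j.succ

/-- The face `m_{⟨⊲p⟩}`. -/
def dMconj (n : ℕ) (p : Fin (n + 1)) (g : Fin (n + 1) → G) (m : Fin (n + 1) → M) : Fin n → M :=
  fun j =>
    if (j : ℕ) + 1 < (p : ℕ) then ract (m j.castSucc) (g p)
    else if (j : ℕ) + 1 = (p : ℕ) then ract (m j.castSucc) (g p) + ract (m j.succ) (φ (g p))
    else ract (m j.succ) (φ (g p))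

/-- The boundary map `∂^{BR_U}_{n+1} : C^{BR_U}_{n+1}(X;ℤ) → C^{BR_U}_n(X;ℤ)`
(the boundary `∂^{BR_U}_k` is `0` for `k ≤ 1`, which agrees with this formula at `n = 0`). -/
def dBRU (n : ℕ) :
    FreeAbelianGroup ((Fin (n + 1) → G) × (Fin (n + 1) → M)) →+
      FreeAbelianGroup ((Fin n → G) × (Fin n → M)) :=
  FreeAbelianGroup.lift fun x =>
    ∑ p : Fin (n + 1),
      (-1 : ℤ) ^ (p : ℕ) •
        (FreeAbelianGroup.of (dGdel n p x.1, dMmer n p x.2) -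
          FreeAbelianGroup.of (dGconj n p x.1, dMconj φ n p x.1 x.2))

/-- The birack boundary map `∂^{BR}_{n+1} : C^{BR}_{n+1}(X;ℤ) → C^{BR}_n(X;ℤ)`
for the `G`-Alexander biquandle `X = M × G` (with trivial `X`-set). -/
def dBR (n : ℕ) :
    FreeAbelianGroup (Fin (n + 1) → M × G) →+ FreeAbelianGroup (Fin n → M × G) :=
  FreeAbelianGroup.lift fun x =>
    ∑ p : Fin (n + 1),
      (-1 : ℤ) ^ (p : ℕ) •
        (FreeAbelianGroup.of (fun j => x (p.succAbove j)) -
          FreeAbelianGroup.of (fun j : Fin n =>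
            if (j : ℕ) < (p : ℕ) then under φ (x j.castSucc) (x p)
            else overOp φ (x j.succ) (x p)))

/-- `γ_n((m₁,g₁),…,(m_n,g_n)) = (g₁,…,g_n; m₁−m₂, …, m_{n−1}−m_n, m_n)`. -/
def gammaMap (n : ℕ) :
    FreeAbelianGroup (Fin n → M × G) →+ FreeAbelianGroup ((Fin n → G) × (Fin n → M)) :=
  FreeAbelianGroup.lift fun x =>
    FreeAbelianGroup.of
      (fun j => (x j).2,
       fun j => (x j).1 - if h : (j : ℕ) + 1 < n then (x ⟨(j : ℕ) + 1, h⟩).1 else 0)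

/-- `r_n(g₁,…,g_n; m₁,…,m_n) = ((m₁+⋯+m_n, g₁), (m₂+⋯+m_n, g₂), …, (m_n, g_n))`. -/
def rMap (n : ℕ) :
    FreeAbelianGroup ((Fin n → G) × (Fin n → M)) →+ FreeAbelianGroup (Fin n → M × G) :=
  FreeAbelianGroup.lift fun p =>
    FreeAbelianGroup.of fun j => ((∑ i ∈ Finset.Ici j, p.2 i), p.1 j)

/-- The boundary map `∂^{BR_U}_{d+1}` of `C^{BR_U}_*(X;ℤ)_X` (the version with `X`-set `X`,
whose degree-`d` chain group is free on `(1+d)`-tuples); it is `0` in degrees `≤ 1`. -/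
def dBRUX : (d : ℕ) →
    FreeAbelianGroup ((Fin (d + 2) → G) × (Fin (d + 2) → M)) →+
      FreeAbelianGroup ((Fin (d + 1) → G) × (Fin (d + 1) → M))
  | 0 => 0
  | d + 1 =>
    FreeAbelianGroup.lift fun x =>
      ∑ i : Fin (d + 2),
        (-1 : ℤ) ^ (i : ℕ) •
          (FreeAbelianGroup.of (dGdel (d + 2) i.succ x.1, dMmer (d + 2) i.succ x.2) -
            FreeAbelianGroup.of (dGconj (d + 2) i.succ x.1, dMconj φ (d + 2) i.succ x.1 x.2))

/-- The boundary map `∂^{BR}_{d+1}` of `C^{BR}_*(X;ℤ)_X` (the version with `X`-set `X`);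
it is `0` in degrees `≤ 1`. -/
def dBRX : (d : ℕ) →
    FreeAbelianGroup (Fin (d + 2) → M × G) →+ FreeAbelianGroup (Fin (d + 1) → M × G)
  | 0 => 0
  | d + 1 =>
    FreeAbelianGroup.lift fun x =>
      ∑ i : Fin (d + 2),
        (-1 : ℤ) ^ (i : ℕ) •
          (FreeAbelianGroup.of (fun j => x (i.succ.succAbove j)) -
            FreeAbelianGroup.of (fun j : Fin (d + 2) =>
              if (j : ℕ) < (i : ℕ) + 1 then under φ (x j.castSucc) (x i.succ)
              else overOp φ (x j.succ) (x i.succ)))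


/-- The subgroup of `G`-coinvariants relations in `C^{gp}_n(M;ℤ)`:
generated by all `(m₁g,…,m_ng) − (m₁,…,m_n)`. -/
def coinvSub (n : ℕ) : AddSubgroup (FreeAbelianGroup (Fin n → M)) :=
  AddSubgroup.closure
    {z | ∃ (m : Fin n → M) (g : G),
        z = FreeAbelianGroup.of (fun i => ract (m i) g) - FreeAbelianGroup.of m}

/-- The coinvariant group chain group `C^{gp}_n(M;ℤ)_G`. -/
abbrev CgpG (n : ℕ) : Type _ :=
  FreeAbelianGroup (Fin n → M) ⧸ coinvSub (G := G) (M := M) n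

/-- The group-homology boundary map `∂^{gp}_{n+1} : C^{gp}_{n+1}(M;ℤ) → C^{gp}_n(M;ℤ)`
(it is `0` in degrees `≤ 1`, which agrees with this formula at `n = 0`). -/
def dgp (n : ℕ) :
    FreeAbelianGroup (Fin (n + 1) → M) →+ FreeAbelianGroup (Fin n → M) :=
  FreeAbelianGroup.lift fun m =>
    (∑ p : Fin (n + 1), (-1 : ℤ) ^ (p : ℕ) • FreeAbelianGroup.of (dMmer n p m)) +
      (-1 : ℤ) ^ (n + 1) • FreeAbelianGroup.of fun j : Fin n => m j.castSucc

/-- `|k| = k₁ + ⋯ + k_n`. -/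
def wt {n : ℕ} (k : Fin n → Bool) : ℕ := ∑ i, if k i then 1 else 0

/-- `g_{k,i} = φ(g₀^{k₀} ⋯ g_i^{k_i}) · g_{i+1}^{k_{i+1}} ⋯ g_{n-1}^{k_{n-1}}`
(indices written `0`-based; the products are ordered). -/
def gki {n : ℕ} (g : Fin n → G) (k : Fin n → Bool) (i : Fin n) : G :=
  φ ((((List.finRange n).filter fun j => decide (j ≤ i)).map
        fun j => if k j then g j else 1).prod) *
    (((List.finRange n).filter fun j => decide (i < j)).map
        fun j => if k j then g j else 1).prod

/-- The value of `ψ` on a generator: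
`Σ_{k, k₀ = 0} (−1)^{|k|} (m₀ g_{k,0}, …, m_n g_{k,n})`, as an element of the free
abelian group (before passing to coinvariants). -/
def psiVal (n : ℕ) (x : (Fin (n + 1) → G) × (Fin (n + 1) → M)) :
    FreeAbelianGroup (Fin (n + 1) → M) :=
  ∑ k ∈ Finset.univ.filter fun k : Fin (n + 1) → Bool => k 0 = false,
    (-1 : ℤ) ^ wt k • FreeAbelianGroup.of fun i => ract (x.2 i) (gki φ x.1 k i)

/-- `ψ` as a homomorphism into the free abelian group (before coinvariants). -/
def psiFree (n : ℕ) :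
    FreeAbelianGroup ((Fin (n + 1) → G) × (Fin (n + 1) → M)) →+
      FreeAbelianGroup (Fin (n + 1) → M) :=
  FreeAbelianGroup.lift (psiVal φ n)

/-- The homomorphism `ψ : C^{BR_U} → C^{gp}(M;ℤ)_G`. -/
def psiG (n : ℕ) :
    FreeAbelianGroup ((Fin (n + 1) → G) × (Fin (n + 1) → M)) →+
      CgpG (G := G) (M := M) (n + 1) :=
  (QuotientAddGroup.mk' (coinvSub (G := G) (M := M) (n + 1))).comp (psiFree φ n)

/-- The homomorphism `ψ_{•,λ}`, sending a generator `x` to `ψ(x) ⊗ λ(x₁)` where `x₁` is the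
first `G`-entry of `x`. -/
noncomputable def psiLam (lam : G → A) (n : ℕ) :
    FreeAbelianGroup ((Fin (n + 1) → G) × (Fin (n + 1) → M)) →+
      TensorProduct ℤ (CgpG (G := G) (M := M) (n + 1)) A :=
  FreeAbelianGroup.lift fun x =>
    (QuotientAddGroup.mk' (coinvSub (G := G) (M := M) (n + 1)) (psiVal φ n x)) ⊗ₜ[ℤ]
      lam (x.1 0)

/-- `D^{gp}_n(M;ℤ)_G`: the image in the coinvariants of the subgroup generated by tuples
with a vanishing entry in a position `1 ≤ i ≤ n−1`. -/
def DgpGsub (n : ℕ) : AddSubgroup (CgpG (G := G) (M := M) n) :=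
  (AddSubgroup.closure
      {z : FreeAbelianGroup (Fin n → M) |
        ∃ (m : Fin n → M) (i : Fin n),
          (i : ℕ) + 1 < n ∧ m i = 0 ∧ z = FreeAbelianGroup.of m}).map
    (QuotientAddGroup.mk' (coinvSub (G := G) (M := M) n))

/-- ordered product of a tuple -/
def LL {n : ℕ} (v : Fin n → G) : G := (List.ofFn v).prod

theorem LL_succ {n : ℕ} (v : Fin (n + 1) → G) : LL v = v 0 * LL (fun t => v t.succ) := by
  simp [LL, List.ofFn_succ]

theorem map_LL {n : ℕ} (v : Fin n → G) : φ (LL v) = LL (fun t => φ (v t)) := by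
  simp [LL, map_list_prod, List.map_ofFn, Function.comp_def]

theorem LL_ins {n : ℕ} (v : Fin (n + 1) → G) (p : Fin (n + 1)) (u : Fin n → G)
    (hu : ∀ t : Fin n, u t =
      if (t : ℕ) < (p : ℕ) then (v p)⁻¹ * v t.castSucc * v p else v t.succ) :
    LL v = v p * LL u := by
  induction n with
  | zero =>
    have : p = 0 := by ext; simp
    subst this
    rw [LL_succ]; simp [LL]
  | succ n ih =>
    refine Fin.cases ?_ (fun q => ?_) p (motive := fun p => (∀ t : Fin (n+1), u t =
      if (t : ℕ) < (p : ℕ) then (v p)⁻¹ * v t.castSucc * v p else v t.succ) →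
      LL v = v p * LL u) hu
    · intro hu
      rw [LL_succ]
      have : u = fun t => v t.succ := by
        funext t; rw [hu]; simp
      rw [this]
    · intro hu
      rw [LL_succ v, LL_succ u, ih (fun t => v t.succ) q (fun t => u t.succ), hu 0]
      · simp [mul_assoc]
      · intro t
        rw [hu]
        simp

theorem prod_filter_map {α : Type*} (l : List α) (S : α → Bool) (w : α → G) :
    ((l.filter S).map w).prod = (l.map fun j => if S j then w j else 1).prod := by
  induction l with
  | nil => simp
  | cons a l ih => by_cases h : S a <;> simp [h, ih]

theorem gki_eq {n : ℕ} (g : Fin n → G) (k : Fin n → Bool) (i : Fin n) :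
    gki φ g k i = φ (LL fun t => if t ≤ i then (if k t then g t else 1) else 1) *
      LL (fun t => if i < t then (if k t then g t else 1) else 1) := by
  unfold gki LL
  rw [prod_filter_map, prod_filter_map, List.ofFn_eq_map, List.ofFn_eq_map]
  simp only [decide_eq_true_eq]

theorem gki_true (hφ : ∀ g : G, φ g ∈ Subgroup.center G) {n : ℕ} (g : Fin (n + 1) → G)
    (p : Fin (n + 1)) (k : Fin n → Bool) (i : Fin (n + 1)) (j : Fin n)
    (h : ∀ t : Fin n, p.succAbove t ≤ i ↔ t ≤ j) :
    gki φ g (p.insertNth true k) i =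
      (if i < p then g p else φ (g p)) * gki φ (dGconj n p g) k j := by
  have hc : ∀ a b : G, φ a * b = b * φ a := fun a b =>
    (Subgroup.mem_center_iff.1 (hφ a) b).symm
  have hs : ∀ t : Fin n, (t : ℕ) < p → p.succAbove t = t.castSucc := fun t ht =>
    Fin.succAbove_of_castSucc_lt _ _ (by simpa [Fin.lt_def] using ht)
  have hs' : ∀ t : Fin n, ¬ (t : ℕ) < p → p.succAbove t = t.succ := fun t ht =>
    Fin.succAbove_of_le_castSucc _ _ (by simpa [Fin.le_def] using ht)
  have hk : ∀ t : Fin n, (t : ℕ) < p →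
      (p.insertNth true k : Fin (n + 1) → Bool) t.castSucc = k t := fun t ht => by
    rw [← hs t ht]; simp
  have hk' : ∀ t : Fin n, ¬ (t : ℕ) < p →
      (p.insertNth true k : Fin (n + 1) → Bool) t.succ = k t := fun t ht => by
    rw [← hs' t ht]; simp
  have h1 : ∀ t : Fin n, (t : ℕ) < p → (t.castSucc ≤ i ↔ t ≤ j) := fun t ht => by
    rw [← hs t ht]; exact h t
  have h2 : ∀ t : Fin n, ¬ (t : ℕ) < p → (t.succ ≤ i ↔ t ≤ j) := fun t ht => by
    rw [← hs' t ht]; exact h t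
  have hl1 : ∀ t : Fin (n + 1), i < t ↔ ¬ t ≤ i := fun _ => not_le.symm
  have hl2 : ∀ t : Fin n, j < t ↔ ¬ t ≤ j := fun _ => not_le.symm
  rw [gki_eq, gki_eq, map_LL, map_LL]
  rw [LL_ins _ p (fun t => φ (if t ≤ j then (if k t then dGconj n p g t else 1) else 1))]
  · by_cases hip : i < p
    · rw [LL_ins (fun t => if i < t then
          (if (p.insertNth true k : Fin (n + 1) → Bool) t then g t else 1) else 1) p
        (fun t => if j < t then (if k t then dGconj n p g t else 1) else 1)]
      · have : ¬ p ≤ i := not_le.2 hip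
        simp only [this, if_false, map_one, one_mul, hip, if_true, Fin.insertNth_apply_same]
        rw [← map_LL, ← mul_assoc, hc, mul_assoc]
      · intro t
        simp only [hip, if_true, Fin.insertNth_apply_same]
        simp only [hl1, hl2]
        by_cases ht : (t : ℕ) < p
        · simp only [ht, if_true, h1 t ht, hk t ht, dGconj]
          split_ifs <;> simp
        · simp only [ht, if_false, h2 t ht, hk' t ht, dGconj]
    · rw [LL_ins (fun t => if i < t then
          (if (p.insertNth true k : Fin (n + 1) → Bool) t then g t else 1) else 1) p
        (fun t => if j < t then (if k t then dGconj n p g t else 1) else 1)]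
      · have : p ≤ i := not_lt.1 hip
        simp only [this, if_true, one_mul, hip, if_false, Fin.insertNth_apply_same, mul_assoc]
      · intro t
        simp only [hip, if_false]
        simp only [hl1, hl2]
        by_cases ht : (t : ℕ) < p
        · have : t.castSucc ≤ i := le_trans (by simp only [Fin.le_def, Fin.val_castSucc]; omega) (not_lt.1 hip)
          have h3 := (h1 t ht).1 this
          simp [h3, this, ht]
        · simp only [ht, if_false, h2 t ht, hk' t ht, dGconj]
  · intro t
    rw [mul_assoc, hc (ite _ _ _), inv_mul_cancel_left]
    by_cases ht : (t : ℕ) < p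
    · simp only [ht, if_true, h1 t ht, hk t ht, dGconj]
      split_ifs <;> simp
      rw [mul_assoc, hc (g _), inv_mul_cancel_left]
    · simp only [ht, if_false, h2 t ht, hk' t ht, dGconj]

theorem gki_false {n : ℕ} (g : Fin (n + 1) → G)
    (p : Fin (n + 1)) (k : Fin n → Bool) (i : Fin (n + 1)) (j : Fin n)
    (h : ∀ t : Fin n, p.succAbove t ≤ i ↔ t ≤ j) :
    gki φ g (p.insertNth false k) i = gki φ (dGdel n p g) k j := by
  have key : ∀ (v : Fin (n + 1) → G) (u : Fin n → G), v p = 1 →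
      (∀ t, u t = v (p.succAbove t)) → LL v = LL u := by
    intro v u hv hu
    rw [LL_ins v p u, hv, one_mul]
    intro t
    rw [hu, hv]
    split_ifs with ht
    · rw [Fin.succAbove_of_castSucc_lt _ _ (by simpa [Fin.lt_def] using ht)]; simp
    · rw [Fin.succAbove_of_le_castSucc _ _ (by simpa [Fin.le_def] using ht)]
  rw [gki_eq, gki_eq]
  congr 1
  · congr 1
    apply key
    · simp
    · intro t; simp [h, dGdel]
  · apply key
    · simp
    · intro t
      have hl1 : ∀ t : Fin (n + 1), i < t ↔ ¬ t ≤ i := fun _ => not_le.symm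
      have hl2 : ∀ t : Fin n, j < t ↔ ¬ t ≤ j := fun _ => not_le.symm
      simp only [hl1, hl2, h, dGdel, Fin.insertNth_apply_succAbove]

theorem wt_ins {n : ℕ} (p : Fin (n + 1)) (b : Bool) (k : Fin n → Bool) :
    wt (p.insertNth b k : Fin (n + 1) → Bool) = (if b then 1 else 0) + wt k := by
  unfold wt
  rw [Fin.sum_univ_succAbove _ p]
  simp

theorem sum_split {n : ℕ} (i : Fin (n + 1)) (H : (Fin (n + 2) → Bool) → A) :
    (∑ k ∈ Finset.univ.filter fun k : Fin (n + 2) → Bool => k 0 = false, (-1 : ℤ) ^ wt k • H k) =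
    ∑ k ∈ Finset.univ.filter fun k : Fin (n + 1) → Bool => k 0 = false, (-1 : ℤ) ^ wt k •
      (H (i.succ.insertNth false k) - H (i.succ.insertNth true k)) := by
  rw [Finset.sum_filter, Finset.sum_filter,
    ← (Fin.insertNthEquiv (fun _ => Bool) i.succ).sum_comp, Fintype.sum_prod_type_right]
  refine Finset.sum_congr rfl fun k _ => ?_
  have h0 : ∀ b, (i.succ.insertNth b k : Fin (n + 2) → Bool) 0 = k 0 := by
    intro b
    have : (0 : Fin (n + 2)) = i.succ.succAbove 0 := by simp
    rw [this, Fin.insertNth_apply_succAbove]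
  have e : ∀ b, (Fin.insertNthEquiv (fun _ => Bool) i.succ) (b, k) =
      (i.succ.insertNth b k : Fin (n + 2) → Bool) := fun _ => rfl
  simp only [Fintype.sum_bool, e, h0, wt_ins]
  by_cases hk : k 0 = false
  · simp [hk, smul_sub, pow_add]
    abel1
  · simp [hk]

theorem ract_mul (m : M) (a b : G) : ract (ract m a) b = ract m (a * b) := by
  simp [ract, smul_smul]

theorem ract_add (m m' : M) (a : G) : ract (m + m') a = ract m a + ract m' a := by
  simp [ract]

theorem ract_sub (m m' : M) (a : G) : ract (m - m') a = ract m a - ract m' a := by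
  simp [ract, smul_sub]

theorem ract_zero (a : G) : ract (0 : M) a = 0 := by
  simp [ract]

theorem mer_false {n : ℕ} (g : Fin (n + 1) → G) (m : Fin (n + 1) → M) (i : Fin n)
    (k : Fin n → Bool) :
    dMmer n i.succ (fun j => ract (m j) (gki φ g (i.succ.insertNth false k) j)) =
      fun j => ract (dMmer n i.succ m j) (gki φ (dGdel n i.succ g) k j) := by
  funext j
  simp only [dMmer]
  split_ifs with h1 h2
  · rw [gki_false φ g i.succ k _ j]
    intro t
    simp only [Fin.succAbove, Fin.le_def, Fin.lt_def, Fin.val_succ, Fin.val_castSucc] at *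
    split_ifs <;> simp <;> omega
  · rw [gki_false φ g i.succ k _ j, gki_false φ g i.succ k _ j, ract_add]
    all_goals
      intro t
      simp only [Fin.succAbove, Fin.le_def, Fin.lt_def, Fin.val_succ, Fin.val_castSucc] at *
      split_ifs <;> simp <;> omega
  · rw [gki_false φ g i.succ k _ j]
    intro t
    simp only [Fin.succAbove, Fin.le_def, Fin.lt_def, Fin.val_succ, Fin.val_castSucc] at *
    split_ifs <;> simp <;> omega

theorem mer_true (hφ : ∀ g : G, φ g ∈ Subgroup.center G)
    {n : ℕ} (g : Fin (n + 1) → G) (m : Fin (n + 1) → M) (i : Fin n)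
    (k : Fin n → Bool) :
    dMmer n i.succ (fun j => ract (m j) (gki φ g (i.succ.insertNth true k) j)) =
      fun j => ract (dMconj φ n i.succ g m j) (gki φ (dGconj n i.succ g) k j) := by
  funext j
  simp only [dMmer, dMconj]
  split_ifs with h1 h2
  · rw [gki_true φ hφ g i.succ k _ j, if_pos, ract_mul]
    · simp only [Fin.lt_def, Fin.val_succ, Fin.val_castSucc] at *; omega
    intro t
    simp only [Fin.succAbove, Fin.le_def, Fin.lt_def, Fin.val_succ, Fin.val_castSucc] at *
    split_ifs <;> simp <;> omega
  · rw [gki_true φ hφ g i.succ k j.castSucc j, gki_true φ hφ g i.succ k j.succ j, ract_add,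
      if_pos, if_neg, ract_mul, ract_mul]
    · simp only [Fin.lt_def, Fin.val_succ, Fin.val_castSucc] at *; omega
    · simp only [Fin.lt_def, Fin.val_succ, Fin.val_castSucc] at *; omega
    all_goals
      intro t
      simp only [Fin.succAbove, Fin.le_def, Fin.lt_def, Fin.val_succ, Fin.val_castSucc] at *
      split_ifs <;> simp <;> omega
  · rw [gki_true φ hφ g i.succ k _ j, if_neg, ract_mul]
    · simp only [Fin.lt_def, Fin.val_succ, Fin.val_castSucc] at *; omega
    intro t
    simp only [Fin.succAbove, Fin.le_def, Fin.lt_def, Fin.val_succ, Fin.val_castSucc] at *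
    split_ifs <;> simp <;> omega

theorem gki_true_false (hφ : ∀ g : G, φ g ∈ Subgroup.center G) {n : ℕ} (g : Fin (n + 2) → G)
    (k : Fin (n + 1) → Bool) (j : Fin (n + 1)) :
    gki φ g ((Fin.succ 0 : Fin (n + 2)).insertNth true k) j.succ =
      gki φ g ((Fin.succ 0 : Fin (n + 2)).insertNth false k) j.succ * φ (g 1) := by
  have hc : ∀ a b : G, φ a * b = b * φ a := fun a b =>
    (Subgroup.mem_center_iff.1 (hφ a) b).symm
  rw [← hc]
  have key : ∀ b, gki φ g ((Fin.succ 0 : Fin (n + 2)).insertNth b k) j.succ =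
      (φ (if k 0 then g 0 else 1)) * (φ (if b then g 1 else 1) *
        (φ (LL fun t : Fin n => if t.succ ≤ j then if k t.succ then g t.succ.succ else 1 else 1) *
        (LL fun t : Fin n => if j < t.succ then if k t.succ then g t.succ.succ else 1 else 1))) := by
    intro b
    have e0 : (Fin.insertNth (Fin.succ 0) b k : Fin (n + 2) → Bool) 0 = k 0 := by
      have : (0 : Fin (n + 2)) = (Fin.succ 0 : Fin (n + 2)).succAbove 0 := by simp
      conv_lhs => rw [this]
      rw [Fin.insertNth_apply_succAbove]
    have e1 : (Fin.insertNth (Fin.succ 0) b k : Fin (n + 2) → Bool) (Fin.succ 0) = b := by simp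
    have e2 : ∀ t : Fin n,
        (Fin.insertNth (Fin.succ 0) b k : Fin (n + 2) → Bool) t.succ.succ = k t.succ := by
      intro t
      have : (t.succ.succ : Fin (n + 2)) = (Fin.succ 0 : Fin (n + 2)).succAbove t.succ := by
        rw [Fin.succAbove_of_le_castSucc]; simp [Fin.le_def]
      rw [this, Fin.insertNth_apply_succAbove]
    rw [gki_eq]
    simp only [LL_succ, e0, e1, e2, map_mul, Fin.succ_le_succ_iff, Fin.succ_lt_succ_iff,
      Fin.zero_le, Fin.not_lt_zero, if_true, if_false, one_mul, mul_assoc]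
    simp
  rw [key, key]
  simp only [if_true, Bool.false_eq_true, if_false, map_one, one_mul]
  rw [← mul_assoc, ← mul_assoc, hc (ite _ _ _)]
  simp only [mul_assoc]

theorem gki_last (hφ : ∀ g : G, φ g ∈ Subgroup.center G) {n : ℕ} (g : Fin (n + 2) → G)
    (k : Fin (n + 1) → Bool) (j : Fin (n + 1)) :
    gki φ g ((Fin.last n).succ.insertNth true k) j.castSucc =
      gki φ g ((Fin.last n).succ.insertNth false k) j.castSucc * g (Fin.last (n + 1)) := by
  have : ∀ {n : ℕ} (v : Fin (n + 1) → G),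
      LL v = LL (fun t : Fin n => v t.castSucc) * v (Fin.last n) := by
    intro n v
    rw [LL, List.ofFn_succ_last]; simp [LL]
  have e : ∀ b, ∀ t : Fin (n + 1),
      (Fin.insertNth (Fin.last (n + 1)) b k : Fin (n + 2) → Bool) t.castSucc = k t := by
    intro b t; simp
  rw [gki_eq, gki_eq, Fin.succ_last]
  simp only [this (n := n + 1), e, Fin.insertNth_apply_same]
  have hl : j.castSucc < Fin.last (n + 1) := Fin.castSucc_lt_last j
  simp [hl, mul_assoc, not_le.2 hl]

theorem gamma_del {n : ℕ} (x : Fin (n + 3) → M × G) (i : Fin (n + 2)) :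
    gammaMap (n + 2) (FreeAbelianGroup.of fun j => x (i.succ.succAbove j)) =
      FreeAbelianGroup.of (dGdel (n + 2) i.succ (fun j => (x j).2),
        dMmer (n + 2) i.succ (fun j : Fin (n + 3) =>
          (x j).1 - if h : (j : ℕ) + 1 < n + 3 then (x ⟨(j : ℕ) + 1, h⟩).1 else 0)) := by
  simp only [gammaMap, FreeAbelianGroup.lift_apply_of]
  congr 2
  funext j
  obtain ⟨y, hy⟩ : ∃ y : ℕ → M, y = fun a => if h : a < n + 3 then (x ⟨a, h⟩).1 else 0 := ⟨_, rfl⟩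
  have hx : ∀ a : Fin (n + 3), (x a).1 = y a := by intro a; simp [hy]
  have hy' : ∀ a : ℕ, (if h : a < n + 3 then y a else 0) = y a := by
    intro a; by_cases h : a < n + 3 <;> simp [hy, h]
  have hz : ∀ a, n + 3 ≤ a → y a = 0 := by intro a h; simp [hy, not_lt.2 h]
  simp only [hx, hy', dMmer, Fin.succAbove, Fin.lt_def, Fin.val_succ, Fin.val_castSucc, apply_ite y,
    apply_ite Fin.val]
  have hj := j.2
  have hi := i.2
  by_cases h : (j : ℕ) + 1 < n + 2
  · rw [dif_pos h]
    split_ifs <;> first | omega | abel1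
  · rw [dif_neg h, ← hz (j + 2) (by omega)]
    split_ifs <;> first | omega | abel1

theorem gamma_conj {n : ℕ} (x : Fin (n + 3) → M × G) (i : Fin (n + 2)) :
    gammaMap (n + 2) (FreeAbelianGroup.of (fun j : Fin (n + 2) =>
              if (j : ℕ) < (i : ℕ) + 1 then under φ (x j.castSucc) (x i.succ)
              else overOp φ (x j.succ) (x i.succ))) =
      FreeAbelianGroup.of (dGconj (n + 2) i.succ (fun j => (x j).2),
        dMconj φ (n + 2) i.succ (fun j => (x j).2) (fun j : Fin (n + 3) =>
          (x j).1 - if h : (j : ℕ) + 1 < n + 3 then (x ⟨(j : ℕ) + 1, h⟩).1 else 0)) := by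
  simp only [gammaMap, FreeAbelianGroup.lift_apply_of]
  congr 2
  · funext j
    simp only [dGconj, Fin.val_succ]
    split_ifs <;> rfl
  funext j
  obtain ⟨y, hy⟩ : ∃ y : ℕ → M, y = fun a => if h : a < n + 3 then (x ⟨a, h⟩).1 else 0 := ⟨_, rfl⟩
  have hx : ∀ a : Fin (n + 3), (x a).1 = y a := by intro a; simp [hy]
  have hy' : ∀ a : ℕ, (if h : a < n + 3 then y a else 0) = y a := by
    intro a; by_cases h : a < n + 3 <;> simp [hy, h]
  have hz : ∀ a, n + 3 ≤ a → y a = 0 := by intro a h; simp [hy, not_lt.2 h]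
  simp only [hx, hy', dMconj, under, overOp, Fin.val_succ, Fin.val_castSucc,
    apply_ite Prod.fst]
  have hj := j.2
  have hi := i.2
  by_cases h : (j : ℕ) + 1 < n + 2
  · rw [dif_pos h]
    split_ifs with h1 h2 h3 h4 h5 <;> simp only [Fin.castSucc_mk, Fin.succ_mk, ract_sub] <;>
      first | omega | abel1 | (simp only [show (i : ℕ) = j by omega]; abel1)
  · rw [dif_neg h, ← ract_zero (M := M) (φ (x i.succ).2), ← hz (j + 2) (by omega)]
    split_ifs with h1 h2 h3 h4 h5 <;> simp only [ract_sub] <;>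
      first | omega | abel1 | (simp only [show (i : ℕ) = j by omega]; abel1)

/-- Let `n ≥ 1` (encoded as `n+1` below) and let
`f : C^{gp}_{n+1}(M;ℤ)_G → A` be a group `(n+1)`-cocycle (`f ∘ ∂^{gp}_{n+2} = 0`).
Then `Φ_f = f ∘ ψ_n ∘ γ_n : C^{BR}_n(X;ℤ)_X → A` is a birack `n`-cocycle of the
`G`-Alexander biquandle with `X`-set `X`: `Φ_f ∘ ∂^{BR}_{n+1} = 0`. -/
theorem birackX_cocycle_of_group_cocycle (hφ : ∀ g : G, φ g ∈ Subgroup.center G) :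
    ∀ (n : ℕ) (f : CgpG (G := G) (M := M) (n + 2) →+ A),
      f.comp ((QuotientAddGroup.mk' (coinvSub (G := G) (M := M) (n + 2))).comp
          (dgp (M := M) (n + 2))) = 0 →
      ((f.comp (psiG φ (n + 1))).comp (gammaMap (n + 2))).comp (dBRX φ (n + 1)) = 0 := by
  intro n f hf
  obtain ⟨F, hF⟩ : ∃ F : FreeAbelianGroup (Fin (n + 2) → M) →+ A,
      F = f.comp (QuotientAddGroup.mk' (coinvSub (G := G) (M := M) (n + 2))) := ⟨_, rfl⟩
  have hinv : ∀ (v : Fin (n + 2) → M) (g : G),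
      F (FreeAbelianGroup.of fun i => ract (v i) g) = F (FreeAbelianGroup.of v) := by
    intro v g
    rw [← sub_eq_zero, ← map_sub, hF, AddMonoidHom.comp_apply, QuotientAddGroup.mk'_apply,
      (QuotientAddGroup.eq_zero_iff _).2, map_zero]
    exact AddSubgroup.subset_closure ⟨v, g, rfl⟩
  have hcoc : ∀ v : Fin (n + 3) → M,
      (∑ p : Fin (n + 3), (-1 : ℤ) ^ (p : ℕ) • F (FreeAbelianGroup.of (dMmer (n + 2) p v))) +
      (-1 : ℤ) ^ (n + 3) • F (FreeAbelianGroup.of fun j : Fin (n + 2) => v j.castSucc) = 0 := by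
    intro v
    have := DFunLike.congr_fun hf (FreeAbelianGroup.of v)
    rw [← AddMonoidHom.comp_assoc, ← hF] at this
    simpa only [AddMonoidHom.comp_apply, dgp, FreeAbelianGroup.lift_apply_of, map_add, map_sum,
      map_zsmul, AddMonoidHom.zero_apply] using this
  have hpsi : ∀ y, f (psiG φ (n + 1) (FreeAbelianGroup.of y)) =
      ∑ k ∈ Finset.univ.filter fun k : Fin (n + 2) → Bool => k 0 = false,
        (-1 : ℤ) ^ wt k •
          F (FreeAbelianGroup.of fun i => ract (y.2 i) (gki φ y.1 k i)) := by
    intro y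
    have : f (psiG φ (n + 1) (FreeAbelianGroup.of y)) =
        F (psiFree φ (n + 1) (FreeAbelianGroup.of y)) := by rw [hF]; rfl
    rw [this]
    simp only [psiFree, FreeAbelianGroup.lift_apply_of, psiVal, map_sum, map_zsmul]
  ext x
  simp only [AddMonoidHom.comp_apply, AddMonoidHom.zero_apply, dBRX,
    FreeAbelianGroup.lift_apply_of, map_sum, map_zsmul, map_sub, gamma_del, gamma_conj, hpsi]
  obtain ⟨g, hg⟩ : ∃ g : Fin (n + 3) → G, g = fun j => (x j).2 := ⟨_, rfl⟩
  obtain ⟨m, hm⟩ : ∃ m : Fin (n + 3) → M, m = fun j : Fin (n + 3) =>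
    (x j).1 - if h : (j : ℕ) + 1 < n + 3 then (x ⟨(j : ℕ) + 1, h⟩).1 else 0 := ⟨_, rfl⟩
  simp only [← hg, ← hm]
  obtain ⟨T, hT⟩ : ∃ T : (Fin (n + 3) → Bool) → Fin (n + 3) → M,
    T = fun k j => ract (m j) (gki φ g k j) := ⟨_, rfl⟩
  have h0 : (∑ k ∈ Finset.univ.filter fun k : Fin (n + 3) → Bool => k 0 = false,
      (-1 : ℤ) ^ wt k • F (FreeAbelianGroup.of (dMmer (n + 2) 0 (T k)))) = 0 := by
    rw [sum_split 0]
    refine Finset.sum_eq_zero fun k _ => ?_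
    have : dMmer (n + 2) 0 (T (Fin.insertNth (Fin.succ 0) true k)) = fun j =>
        ract (dMmer (n + 2) 0 (T (Fin.insertNth (Fin.succ 0) false k)) j) (φ (g 1)) := by
      funext j
      simp only [dMmer, hT]
      simp only [Fin.val_zero, Nat.not_lt_zero, if_false, Nat.succ_ne_zero, ract_mul]
      rw [gki_true_false φ hφ]
    rw [this, hinv, sub_self, smul_zero]
  have hl : (∑ k ∈ Finset.univ.filter fun k : Fin (n + 3) → Bool => k 0 = false,
      (-1 : ℤ) ^ wt k • F (FreeAbelianGroup.of fun j : Fin (n + 2) => T k j.castSucc)) = 0 := by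
    rw [sum_split (Fin.last _)]
    refine Finset.sum_eq_zero fun k _ => ?_
    have : (fun j : Fin (n + 2) => T (Fin.insertNth (Fin.succ (Fin.last _)) true k) j.castSucc) =
        fun j => ract ((fun j : Fin (n + 2) =>
          T (Fin.insertNth (Fin.succ (Fin.last _)) false k) j.castSucc) j) (g (Fin.last _)) := by
      funext j
      simp only [hT, ract_mul]
      rw [gki_last φ hφ]
    rw [this, hinv, sub_self, smul_zero]
  have hmid : ∀ i : Fin (n + 2),
      (∑ k ∈ Finset.univ.filter fun k : Fin (n + 3) → Bool => k 0 = false,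
      (-1 : ℤ) ^ wt k • F (FreeAbelianGroup.of (dMmer (n + 2) i.succ (T k)))) =
      (∑ k ∈ Finset.univ.filter fun k : Fin (n + 2) → Bool => k 0 = false, (-1 : ℤ) ^ wt k •
        F (FreeAbelianGroup.of fun j => ract (dMmer (n + 2) i.succ m j)
          (gki φ (dGdel (n + 2) i.succ g) k j))) -
      ∑ k ∈ Finset.univ.filter fun k : Fin (n + 2) → Bool => k 0 = false, (-1 : ℤ) ^ wt k •
        F (FreeAbelianGroup.of fun j => ract (dMconj φ (n + 2) i.succ g m j)
          (gki φ (dGconj (n + 2) i.succ g) k j)) := by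
    intro i
    rw [sum_split i, ← Finset.sum_sub_distrib]
    refine Finset.sum_congr rfl fun k _ => ?_
    rw [hT, mer_false, mer_true φ hφ, smul_sub]
  simp only [← hmid]
  have htot : (∑ k ∈ Finset.univ.filter fun k : Fin (n + 3) → Bool => k 0 = false,
      (-1 : ℤ) ^ wt k • (0 : A)) = 0 := by simp
  have hex : ∀ k, (0 : A) = _ := fun k => (hcoc (T k)).symm
  rw [Finset.sum_congr rfl (fun k _ => congrArg (fun a : A => (-1 : ℤ) ^ wt k • a) (hex k))] at htot
  simp only [smul_add, Finset.sum_add_distrib, Finset.smul_sum] at htot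
  rw [Finset.sum_comm] at htot
  simp only [smul_comm ((-1 : ℤ) ^ wt _), ← Finset.smul_sum, hl, smul_zero, add_zero] at htot
  rw [Fin.sum_univ_succ, h0, smul_zero, zero_add] at htot
  rw [← neg_eq_zero, ← Finset.sum_neg_distrib, ← htot]
  refine Finset.sum_congr rfl fun i _ => ?_
  rw [Fin.val_succ, pow_succ]
  simp

end GAlex
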